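/- arXiv:1602.05511 — 4 statements merged into one kernel-verified Lean document; each statement's English description precedes it below -/
import Mathlib

section
/- Let h(D) = h₀ + h₁D + ⋯ + h_ν D^ν be a nonzero real polynomial, let 0 ≤ ε ≤ 1/2, and suppose the single-track minimum distance d₀² is attained by some nonzero admissible sequence. Then the infimum over all error events (eᵃ, eᵇ) of d²_ML(eᵃ,eᵇ) = ((1+ε)²/2)·‖e⁺∗h‖² + ((1−ε)²/2)·‖e⁻∗h‖² is attained and equals (1+ε²)·d₀² if 0 ≤ ε ≤ 2−√3, and equals 2(1−ε)²·d₀² if 2−√3 ≤ ε ≤ 1/2. -/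
/-!
Write `A`, `B`, `E⁺`, `E⁻` for the energies of `eᵃ`, `eᵇ`, `e⁺`, `e⁻`. If one of the two tracks is
error-free, then `E⁺ = E⁻`, and the distance is `(1 + ε²)` times the energy of the other track, hence
at least `(1 + ε²) d₀²` (`ml_single`). If both tracks are in error, then `(1 + ε)² ≥ (1 - ε)²` and
the parallelogram law `E⁺ + E⁻ = 2A + 2B` (`energy_parallelogram`) give the lower bound
`(1 - ε)² (A + B) ≥ 2 (1 - ε)² d₀²`. Both bounds are attained, for `e` a minimiser of the
single-track problem: by `(e, 0)` and by `(e, -e)` respectively. Finally `1 + ε² ≤ 2 (1 - ε)²` is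
equivalent to `ε² - 4ε + 1 ≥ 0`, whose smaller root is `2 - √3`, so this threshold decides which of
the two values is the minimum.
-/

/-- The filtered error sequence `(e∗h)_k = Σ_{i=0}^{ν} h_i e_{k−i}`. -/
noncomputable def filt (ν : ℕ) (h : ℕ → ℝ) (e : ℤ → ℝ) (k : ℤ) : ℝ :=
  ∑ i ∈ Finset.range (ν + 1), h i * e (k - i)

/-- The energy `‖e∗h‖² = Σ_{k∈ℤ} (e∗h)_k²`. -/
noncomputable def energy (ν : ℕ) (h : ℕ → ℝ) (e : ℤ → ℝ) : ℝ :=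
  ∑ᶠ k : ℤ, (filt ν h e k) ^ 2

/-- A finitely supported sequence taking values in {−2, 0, 2}. -/
def Admissible (e : ℤ → ℝ) : Prop :=
  (Function.support e).Finite ∧ ∀ k, e k ∈ ({-2, 0, 2} : Set ℝ)

/-- Filtering by a finite impulse response preserves finiteness of the support, so that the `finsum`
defining the energy of an admissible sequence is a genuine sum. -/
lemma filt_support_finite (ν : ℕ) (h : ℕ → ℝ) {e : ℤ → ℝ} (he : (Function.support e).Finite) :
    (Function.support (filt ν h e)).Finite := by
  refine Set.Finite.subset ((Finset.range (ν + 1)).finite_toSet.biUnion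
    (fun i _ => he.image (fun k : ℤ => k + (i : ℤ)))) ?_
  intro k hk
  obtain ⟨i, hi, hne⟩ := Finset.exists_ne_zero_of_sum_ne_zero (Function.mem_support.mp hk)
  simp only [Set.mem_iUnion]
  exact ⟨i, hi, k - i, right_ne_zero_of_mul hne, by simp⟩

lemma filt_add (ν : ℕ) (h : ℕ → ℝ) (a b : ℤ → ℝ) (k : ℤ) :
    filt ν h (fun j => a j + b j) k = filt ν h a k + filt ν h b k := by
  simp only [filt, mul_add, Finset.sum_add_distrib]

lemma filt_smul (ν : ℕ) (h : ℕ → ℝ) (c : ℝ) (a : ℤ → ℝ) (k : ℤ) :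
    filt ν h (fun j => c * a j) k = c * filt ν h a k := by
  simp only [filt, Finset.mul_sum]
  exact Finset.sum_congr rfl fun i _ => by ring

lemma filt_sub (ν : ℕ) (h : ℕ → ℝ) (a b : ℤ → ℝ) (k : ℤ) :
    filt ν h (fun j => a j - b j) k = filt ν h a k - filt ν h b k := by
  simp only [filt, mul_sub, Finset.sum_sub_distrib]

lemma sq_support_finite {f : ℤ → ℝ} (hf : (Function.support f).Finite) :
    (Function.support fun k => f k ^ 2).Finite :=
  hf.subset fun k hk hk0 => hk (by simp [hk0])

lemma energy_nonneg (ν : ℕ) (h : ℕ → ℝ) (e : ℤ → ℝ) : 0 ≤ energy ν h e :=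
  finsum_nonneg fun _ => sq_nonneg _

lemma energy_smul (ν : ℕ) (h : ℕ → ℝ) (c : ℝ) (e : ℤ → ℝ) :
    energy ν h (fun k => c * e k) = c ^ 2 * energy ν h e := by
  simp only [energy, filt_smul, mul_pow]
  exact (smul_finsum (c ^ 2) fun k => filt ν h e k ^ 2).symm

lemma energy_zero (ν : ℕ) (h : ℕ → ℝ) : energy ν h (fun _ => 0) = 0 := by
  simp [energy, filt]

lemma energy_parallelogram (ν : ℕ) (h : ℕ → ℝ) {a b : ℤ → ℝ}
    (ha : (Function.support a).Finite) (hb : (Function.support b).Finite) :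
    energy ν h (fun k => a k + b k) + energy ν h (fun k => a k - b k)
      = 2 * energy ν h a + 2 * energy ν h b := by
  have hp : (Function.support fun k => a k + b k).Finite :=
    (ha.union hb).subset (Function.support_add a b)
  have hm : (Function.support fun k => a k - b k).Finite :=
    (ha.union hb).subset (Function.support_sub a b)
  have hsq : ∀ {e : ℤ → ℝ}, (Function.support e).Finite →
      (Function.support fun k => filt ν h e k ^ 2).Finite :=
    fun he => sq_support_finite (filt_support_finite ν h he)
  rw [← mul_add]
  unfold energy
  rw [← finsum_add_distrib (hsq hp) (hsq hm), ← finsum_add_distrib (hsq ha) (hsq hb),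
    ← smul_eq_mul, smul_finsum]
  refine finsum_congr fun k => ?_
  rw [filt_add, filt_sub, smul_eq_mul]
  ring

/-- The distance of an event confined to the first track. -/
lemma ml_single (ν : ℕ) (h : ℕ → ℝ) (ε : ℝ) (e : ℤ → ℝ) :
    (1 + ε)^2 / 2 * energy ν h (fun k => e k + (0 : ℤ → ℝ) k)
      + (1 - ε)^2 / 2 * energy ν h (fun k => e k - (0 : ℤ → ℝ) k)
      = (1 + ε^2) * energy ν h e := by
  simp only [Pi.zero_apply, add_zero, sub_zero]
  ring

lemma admissible_zero : Admissible 0 := by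
  constructor <;> simp

lemma Admissible.neg {e : ℤ → ℝ} (he : Admissible e) : Admissible (fun k => -1 * e k) := by
  refine ⟨he.1.subset fun k hk => right_ne_zero_of_mul hk, fun k => ?_⟩
  rcases he.2 k with hk | hk | hk
  · simp [hk]
  · simp [hk]
  · simp [Set.mem_singleton_iff.mp hk]

theorem ml_min_distance_general (ν : ℕ) (h : ℕ → ℝ) (hh : ∃ i ≤ ν, h i ≠ 0)
    (ε : ℝ) (hε0 : 0 ≤ ε) (hε : ε ≤ 1/2) (d0sq : ℝ)
    (hd0 : IsLeast {x | ∃ e : ℤ → ℝ, Admissible e ∧ e ≠ 0 ∧ x = energy ν h e} d0sq) :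
    (ε ≤ 2 - Real.sqrt 3 →
      IsLeast {x | ∃ ea eb : ℤ → ℝ, Admissible ea ∧ Admissible eb ∧ ¬ (ea = 0 ∧ eb = 0) ∧
          x = (1 + ε)^2 / 2 * energy ν h (fun k => ea k + eb k)
              + (1 - ε)^2 / 2 * energy ν h (fun k => ea k - eb k)}
        ((1 + ε^2) * d0sq)) ∧
    (2 - Real.sqrt 3 ≤ ε →
      IsLeast {x | ∃ ea eb : ℤ → ℝ, Admissible ea ∧ Admissible eb ∧ ¬ (ea = 0 ∧ eb = 0) ∧
          x = (1 + ε)^2 / 2 * energy ν h (fun k => ea k + eb k)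
              + (1 - ε)^2 / 2 * energy ν h (fun k => ea k - eb k)}
        (2 * (1 - ε)^2 * d0sq)) := by
  obtain ⟨⟨e, he, hene, rfl⟩, hmin⟩ := hd0
  have hle : ∀ f : ℤ → ℝ, Admissible f → f ≠ 0 → energy ν h e ≤ energy ν h f :=
    fun f hf hf0 => hmin ⟨f, hf, hf0, rfl⟩
  have hE := energy_nonneg ν h e
  have hs : Real.sqrt 3 ^ 2 = 3 := Real.sq_sqrt (by norm_num)
  have hs0 := Real.sqrt_nonneg 3
  -- Every event lies above one of the two candidate values.
  have key : ∀ ea eb : ℤ → ℝ, Admissible ea → Admissible eb → ¬ (ea = 0 ∧ eb = 0) →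
      (1 + ε^2) * energy ν h e ≤ (1 + ε)^2 / 2 * energy ν h (fun k => ea k + eb k)
              + (1 - ε)^2 / 2 * energy ν h (fun k => ea k - eb k) ∨
      2 * (1 - ε)^2 * energy ν h e ≤ (1 + ε)^2 / 2 * energy ν h (fun k => ea k + eb k)
              + (1 - ε)^2 / 2 * energy ν h (fun k => ea k - eb k) := by
    intro ea eb ha hb hne
    by_cases hb0 : eb = 0
    · left
      have ha0 : ea ≠ 0 := fun h0 => hne ⟨h0, hb0⟩
      rw [hb0, ml_single]
      exact mul_le_mul_of_nonneg_left (hle ea ha ha0) (by positivity)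
    by_cases ha0 : ea = 0
    · left
      have hneg : energy ν h (fun k => -eb k) = energy ν h eb := by
        simpa using energy_smul ν h (-1) eb
      have hmul := mul_le_mul_of_nonneg_left (hle eb hb hb0) (by positivity : 0 ≤ 1 + ε ^ 2)
      simp only [ha0, Pi.zero_apply, zero_add, zero_sub, hneg]
      linarith
    · right
      have hpar := energy_parallelogram ν h ha.1 hb.1
      have hsum : 4 * energy ν h e ≤
          energy ν h (fun k => ea k + eb k) + energy ν h (fun k => ea k - eb k) := by
        linarith [hle ea ha ha0, hle eb hb hb0]
      have hmul := mul_le_mul_of_nonneg_left hsum (by positivity : 0 ≤ (1 - ε) ^ 2 / 2)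
      have hplus := mul_nonneg hε0 (energy_nonneg ν h (fun k => ea k + eb k))
      linarith
  constructor
  · intro hlt
    -- `ε² - 4ε + 1 = (2 - √3 - ε) (2 + √3 - ε)`
    have hcmp : 1 + ε^2 ≤ 2 * (1 - ε)^2 := by
      linarith [mul_nonneg (by linarith : 0 ≤ 2 - Real.sqrt 3 - ε)
        (by linarith : 0 ≤ 2 + Real.sqrt 3 - ε)]
    refine ⟨⟨e, 0, he, admissible_zero, fun h0 => hene h0.1, (ml_single ν h ε e).symm⟩, ?_⟩
    rintro x ⟨ea, eb, ha, hb, hne, rfl⟩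
    rcases key ea eb ha hb hne with hk | hk
    · exact hk
    · exact (mul_le_mul_of_nonneg_right hcmp hE).trans hk
  · intro hgt
    have hcmp : 2 * (1 - ε)^2 ≤ 1 + ε^2 := by
      linarith [mul_nonneg (by linarith : 0 ≤ ε - (2 - Real.sqrt 3))
        (by linarith : 0 ≤ 2 + Real.sqrt 3 - ε)]
    refine ⟨⟨e, fun k => -1 * e k, he, he.neg, fun h0 => hene h0.1, ?_⟩, ?_⟩
    · have hplus : energy ν h (fun k => e k + -1 * e k) = 0 := by
        simpa using energy_zero ν h
      have hminus : energy ν h (fun k => e k - -1 * e k) = 2 ^ 2 * energy ν h e := by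
        rw [← energy_smul]
        congr 1
        ext k
        ring
      rw [hplus, hminus]
      ring
    · rintro x ⟨ea, eb, ha, hb, hne, rfl⟩
      rcases key ea eb ha hb hne with hk | hk
      · exact (mul_le_mul_of_nonneg_right hcmp hE).trans hk
      · exact hk
end

section
/- For the dicode channel h(D) = 1 − D and any 0 ≤ ε ≤ 1/2, the infimum over all error events (eᵃ, eᵇ) of d²_ML(eᵃ,eᵇ) = ((1+ε)²/2)·‖e⁺∗h‖² + ((1−ε)²/2)·‖e⁻∗h‖² is attained and equals 8(1+ε²) if 0 ≤ ε ≤ 2−√3, and equals 16(1−ε)² if 2−√3 ≤ ε ≤ 1/2. -/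
/-- The dicode channel `h(D) = 1 − D`. -/
noncomputable def dicode : ℕ → ℝ := fun i => if i = 0 then 1 else if i = 1 then -1 else 0

theorem filt_dicode (e : ℤ → ℝ) (k : ℤ) : filt 1 dicode e k = e k - e (k - 1) := by
  simp [filt, dicode, Finset.sum_range_succ]
  ring

theorem energy_eq_sum (e : ℤ → ℝ) (S : Finset ℤ) (hS : ∀ k, k ∉ S → e k - e (k - 1) = 0) :
    energy 1 dicode e = ∑ k ∈ S, (e k - e (k - 1)) ^ 2 := by
  unfold energy
  simp only [filt_dicode]
  apply finsum_eq_sum_of_support_subset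
  intro k hk
  by_contra h
  exact hk (by simp [hS k h])

theorem energy_single (c : ℝ) :
    energy 1 dicode (fun k => if k = 0 then c else 0) = 2 * c ^ 2 := by
  rw [energy_eq_sum _ {0, 1}]
  · simp
    ring
  · intro k hk
    simp only [Finset.mem_insert, Finset.mem_singleton, not_or] at hk
    have : k - 1 ≠ 0 := by omega
    simp [hk.1, this]

theorem admissible_single (c : ℝ) (hc : c ∈ ({-2, 0, 2} : Set ℝ)) :
    Admissible (fun k => if k = 0 then c else 0) := by
  refine ⟨(Set.finite_singleton (0 : ℤ)).subset ?_, ?_⟩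
  · intro k hk
    by_contra h
    exact hk (if_neg h)
  · intro k
    dsimp only
    split_ifs
    · exact hc
    · simp

theorem sub_mem_five {x y : ℝ} (hx : x ∈ ({-2, 0, 2} : Set ℝ)) (hy : y ∈ ({-2, 0, 2} : Set ℝ)) :
    x - y = -4 ∨ x - y = -2 ∨ x - y = 0 ∨ x - y = 2 ∨ x - y = 4 := by
  simp only [Set.mem_insert_iff, Set.mem_singleton_iff] at hx hy
  rcases hx with rfl | rfl | rfl <;> rcases hy with rfl | rfl | rfl <;> norm_num

/-- A nonzero increment pair costs at least the smaller of the costs of `(2, 0)` and `(2, -2)`. -/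
theorem le_step {ε m a b : ℝ} (hε0 : 0 ≤ ε)
    (h1 : m ≤ 4 * (1 + ε ^ 2)) (h2 : m ≤ 8 * (1 - ε) ^ 2)
    (ha : a = -4 ∨ a = -2 ∨ a = 0 ∨ a = 2 ∨ a = 4)
    (hb : b = -4 ∨ b = -2 ∨ b = 0 ∨ b = 2 ∨ b = 4) (hab : ¬ (a = 0 ∧ b = 0)) :
    m ≤ (1 + ε) ^ 2 / 2 * (a + b) ^ 2 + (1 - ε) ^ 2 / 2 * (a - b) ^ 2 := by
  have e2 := sq_nonneg ε
  have e3 := sq_nonneg (1 - ε)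
  rcases ha with rfl | rfl | rfl | rfl | rfl <;> rcases hb with rfl | rfl | rfl | rfl | rfl <;>
    first
    | exact absurd ⟨rfl, rfl⟩ hab
    | nlinarith

/-- The increment pair is nonzero at the start of the event and just after its end. -/
theorem two_mul_le_dist {ε m : ℝ} (hε0 : 0 ≤ ε)
    (h1 : m ≤ 4 * (1 + ε ^ 2)) (h2 : m ≤ 8 * (1 - ε) ^ 2)
    {ea eb : ℤ → ℝ} (ha : Admissible ea) (hb : Admissible eb) (hne : ¬ (ea = 0 ∧ eb = 0)) :
    2 * m ≤ (1 + ε) ^ 2 / 2 * energy 1 dicode (fun k => ea k + eb k)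
      + (1 - ε) ^ 2 / 2 * energy 1 dicode (fun k => ea k - eb k) := by
  set T : Finset ℤ := (ha.1.union hb.1).toFinset with hT
  have memT : ∀ k, k ∈ T ↔ ¬ (ea k = 0 ∧ eb k = 0) := by
    intro k
    simp only [hT, Set.Finite.mem_toFinset, Set.mem_union, Function.mem_support]
    tauto
  have hTne : T.Nonempty := by
    by_contra h
    rw [Finset.not_nonempty_iff_eq_empty] at h
    have hz : ∀ k, ea k = 0 ∧ eb k = 0 := by
      intro k
      by_contra hk
      simpa [h] using (memT k).2 hk
    exact hne ⟨funext fun k => (hz k).1, funext fun k => (hz k).2⟩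
  set p := T.min' hTne with hp
  set r := T.max' hTne with hr
  have hpT : p ∈ T := T.min'_mem hTne
  have hrT : r ∈ T := T.max'_mem hTne
  have hpr : p ≤ r := T.min'_le r hrT
  have out : ∀ k, k < p ∨ r < k → ea k = 0 ∧ eb k = 0 := by
    intro k hk
    by_contra h
    have hkT := (memT k).2 h
    have h3 : p ≤ k := T.min'_le k hkT
    have h4 : k ≤ r := T.le_max' k hkT
    omega
  have hS : ∀ k, k ∉ Finset.Icc p (r + 1) →
      (ea k = 0 ∧ eb k = 0) ∧ (ea (k - 1) = 0 ∧ eb (k - 1) = 0) := by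
    intro k hk
    rw [Finset.mem_Icc] at hk
    exact ⟨out k (by omega), out (k - 1) (by omega)⟩
  rw [energy_eq_sum _ (Finset.Icc p (r + 1))
      (fun k hk => by obtain ⟨⟨h3, h4⟩, h5, h6⟩ := hS k hk; simp [h3, h4, h5, h6]),
    energy_eq_sum _ (Finset.Icc p (r + 1))
      (fun k hk => by obtain ⟨⟨h3, h4⟩, h5, h6⟩ := hS k hk; simp [h3, h4, h5, h6]),
    Finset.mul_sum, Finset.mul_sum, ← Finset.sum_add_distrib]
  set f : ℤ → ℝ := fun k =>
    (1 + ε) ^ 2 / 2 * (ea k + eb k - (ea (k - 1) + eb (k - 1))) ^ 2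
      + (1 - ε) ^ 2 / 2 * (ea k - eb k - (ea (k - 1) - eb (k - 1))) ^ 2 with hf
  have step : ∀ k, ¬ (ea k - ea (k - 1) = 0 ∧ eb k - eb (k - 1) = 0) → m ≤ f k := by
    intro k hk
    have := le_step hε0 h1 h2 (sub_mem_five (ha.2 k) (ha.2 (k - 1)))
      (sub_mem_five (hb.2 k) (hb.2 (k - 1))) hk
    refine this.trans (le_of_eq ?_)
    simp only [hf]
    ring
  have hfp : m ≤ f p := by
    apply step
    obtain ⟨h3, h4⟩ := out (p - 1) (by omega)
    rw [h3, h4, sub_zero, sub_zero]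
    exact (memT p).1 hpT
  have hfr : m ≤ f (r + 1) := by
    apply step
    obtain ⟨h3, h4⟩ := out (r + 1) (by omega)
    rw [h3, h4, add_sub_cancel_right, zero_sub, zero_sub, neg_eq_zero, neg_eq_zero]
    exact (memT r).1 hrT
  calc 2 * m ≤ f p + f (r + 1) := by linarith
    _ = ∑ k ∈ {p, r + 1}, f k := (Finset.sum_pair (by omega)).symm
    _ ≤ ∑ k ∈ Finset.Icc p (r + 1), f k := by
      apply Finset.sum_le_sum_of_subset_of_nonneg
      · intro k hk
        simp only [Finset.mem_insert, Finset.mem_singleton] at hk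
        rw [Finset.mem_Icc]
        omega
      · intro k _ _
        simp only [hf]
        positivity

theorem ml_min_distance_dicode (ε : ℝ) (hε0 : 0 ≤ ε) (hε : ε ≤ 1/2) :
    (ε ≤ 2 - Real.sqrt 3 →
      IsLeast {x | ∃ ea eb : ℤ → ℝ, Admissible ea ∧ Admissible eb ∧ ¬ (ea = 0 ∧ eb = 0) ∧
          x = (1 + ε)^2 / 2 * energy 1 dicode (fun k => ea k + eb k)
              + (1 - ε)^2 / 2 * energy 1 dicode (fun k => ea k - eb k)}
        (8 * (1 + ε^2))) ∧
    (2 - Real.sqrt 3 ≤ ε →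
      IsLeast {x | ∃ ea eb : ℤ → ℝ, Admissible ea ∧ Admissible eb ∧ ¬ (ea = 0 ∧ eb = 0) ∧
          x = (1 + ε)^2 / 2 * energy 1 dicode (fun k => ea k + eb k)
              + (1 - ε)^2 / 2 * energy 1 dicode (fun k => ea k - eb k)}
        (16 * (1 - ε)^2)) := by
  have h3 : Real.sqrt 3 ^ 2 = 3 := Real.sq_sqrt (by norm_num)
  have h30 : 0 ≤ Real.sqrt 3 := Real.sqrt_nonneg 3
  refine ⟨fun h => ⟨?_, ?_⟩, fun h => ⟨?_, ?_⟩⟩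
  · -- One track has a single error symbol, the other has none.
    refine ⟨fun k => if k = 0 then 2 else 0, 0, admissible_single 2 (by simp),
      ⟨by simp, by simp⟩, ?_, ?_⟩
    · rintro ⟨h0, -⟩
      simpa using congrFun h0 0
    · simp only [Pi.zero_apply, add_zero, sub_zero, energy_single]
      ring
  · rintro x ⟨ea, eb, ha, hb, hne, rfl⟩
    have := two_mul_le_dist (m := 4 * (1 + ε ^ 2)) hε0 le_rfl
      -- `√3 ≤ 2 - ε` squares to `ε² - 4ε + 1 ≥ 0`.
      (by nlinarith) ha hb hne
    linarith
  · -- Single simultaneous errors of opposite signs cancel in `e⁺`.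
    refine ⟨fun k => if k = 0 then 2 else 0, fun k => if k = 0 then -2 else 0,
      admissible_single 2 (by simp), admissible_single (-2) (by simp), ?_, ?_⟩
    · rintro ⟨h0, -⟩
      simpa using congrFun h0 0
    · have hp : (fun k : ℤ => (if k = 0 then (2 : ℝ) else 0) + (if k = 0 then -2 else 0))
          = fun k => if k = 0 then 0 else 0 := by
        funext k
        split_ifs <;> norm_num
      have hm : (fun k : ℤ => (if k = 0 then (2 : ℝ) else 0) - (if k = 0 then -2 else 0))
          = fun k => if k = 0 then 4 else 0 := by
        funext k
        split_ifs <;> norm_num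
      rw [hp, hm, energy_single, energy_single]
      ring
  · rintro x ⟨ea, eb, ha, hb, hne, rfl⟩
    have := two_mul_le_dist (m := 8 * (1 - ε) ^ 2) hε0
      -- `0 ≤ 2 - ε ≤ √3` squares to `ε² - 4ε + 1 ≤ 0`.
      (by nlinarith) le_rfl ha hb hne
    linarith
end

section
/- A bounded sequence x : ℤ → ℝ satisfies x_k + 2x_{k−1} + x_{k−2} = 0 for all k ∈ ℤ if and only if x_k = (−1)^k · x₀ for all k ∈ ℤ. -/
/-! The characteristic polynomial `(1 + D)²` has the double root `-1`, so modulating by `(-1)^k`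
turns the recurrence into the vanishing of the second difference of `y k = (-1)^k * x k`. Such a
two-sided sequence is affine in `k` (`affine_of_second_diff_eq_zero`), and a bounded affine sequence
has slope zero, so `y` is constant. -/

theorem affine_of_second_diff_eq_zero (y : ℤ → ℝ)
    (hy : ∀ k : ℤ, y k - 2 * y (k - 1) + y (k - 2) = 0) (k : ℤ) :
    y k = y 0 + k * (y 1 - y 0) := by
  -- A second-order recurrence needs two consecutive values in the induction hypothesis.
  suffices h : y k = y 0 + k * (y 1 - y 0) ∧ y (k + 1) = y 0 + (k + 1) * (y 1 - y 0) from h.1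
  induction k using Int.induction_on with
  | zero => simp
  | succ n ih =>
    have h := hy (n + 1 + 1)
    rw [show (n : ℤ) + 1 + 1 - 1 = n + 1 by ring, show (n : ℤ) + 1 + 1 - 2 = n by ring] at h
    push_cast at ih ⊢
    exact ⟨ih.2, by linarith [ih.1, ih.2]⟩
  | pred n ih =>
    have h := hy (-n + 1)
    rw [show -(n : ℤ) + 1 - 1 = -n by ring, show -(n : ℤ) + 1 - 2 = -n - 1 by ring] at h
    rw [show -(n : ℤ) - 1 + 1 = -n by ring]
    push_cast at ih ⊢
    exact ⟨by linarith [ih.1, ih.2], by linarith [ih.1]⟩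

theorem slope_eq_zero_of_bounded (a d M : ℝ) (h : ∀ k : ℤ, |a + k * d| ≤ M) : d = 0 := by
  by_contra hd
  have hd' : 0 < |d| := abs_pos.mpr hd
  obtain ⟨n, hn⟩ := exists_nat_gt ((M + |a|) / |d|)
  rw [div_lt_iff₀ hd'] at hn
  have h1 := h n
  have h2 : |(n : ℝ) * d| ≤ |a + n * d| + |a| := by
    simpa using abs_sub (a + n * d) a
  rw [abs_mul, Nat.abs_cast] at h2
  push_cast at h1
  linarith

theorem pr2_zero_cycles_real (x : ℤ → ℝ) (hb : ∃ M : ℝ, ∀ k : ℤ, |x k| ≤ M) :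
    (∀ k : ℤ, x k + 2 * x (k - 1) + x (k - 2) = 0) ↔
      (∀ k : ℤ, x k = (-1 : ℝ)^k * x 0) := by
  have hne : (-1 : ℝ) ≠ 0 := by norm_num
  have e1 (k : ℤ) : (-1 : ℝ) ^ (k - 1) = -(-1 : ℝ) ^ k := by
    rw [zpow_sub_one₀ hne]; norm_num
  have e2 (k : ℤ) : (-1 : ℝ) ^ (k - 2) = (-1 : ℝ) ^ k := by
    rw [show k - 2 = k - 1 - 1 by ring, e1, e1, neg_neg]
  constructor
  · intro h k
    obtain ⟨M, hM⟩ := hb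
    have aff := affine_of_second_diff_eq_zero (fun k => (-1 : ℝ) ^ k * x k) (fun k => by
      simp only [e1, e2]
      linear_combination (-1 : ℝ) ^ k * h k)
    have hd := slope_eq_zero_of_bounded _ _ M (fun k => by
      rw [← aff k, abs_mul, abs_zpow]
      simpa using hM k)
    have hk := aff k
    rw [hd] at hk
    simp only [zpow_zero, one_mul, mul_zero, add_zero] at hk
    have hsq : (-1 : ℝ) ^ k * (-1 : ℝ) ^ k = 1 := by
      rw [← mul_zpow]; norm_num
    linear_combination (-1 : ℝ) ^ k * hk - x k * hsq
  · intro h k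
    rw [h k, h (k - 1), h (k - 2), e1, e2]
    ring
end

section
/- A bounded sequence x : ℤ → ℝ satisfies x_k + x_{k−1} − x_{k−2} − x_{k−3} = 0 for all k ∈ ℤ if and only if there exist reals a and b such that x_k = a + b·(−1)^k for all k ∈ ℤ. -/
/-!
Put `y k = x k - x (k - 2)`. The recurrence says `y k = -y (k - 1)`, so `y` is `2`-periodic, and
hence `x` grows linearly along each parity class: `x (j + 2 * n) = x j + n * y j`. Boundedness
forces `y j = 0` for every `j`, so `x` is itself `2`-periodic, and the `2`-periodic sequences are
exactly the combinations of `1` and `(-1) ^ k`.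
-/

theorem epr4_zero_cycles_real (x : ℤ → ℝ) (hb : ∃ M : ℝ, ∀ k : ℤ, |x k| ≤ M) :
    (∀ k : ℤ, x k + x (k - 1) - x (k - 2) - x (k - 3) = 0) ↔
      (∃ a b : ℝ, ∀ k : ℤ, x k = a + b * (-1 : ℝ)^k) := by
  constructor
  · intro h
    obtain ⟨M, hM⟩ := hb
    have lin : ∀ (j : ℤ) (n : ℕ),
        x (j + 2 * n) = x j + n * (x j - x (j - 2)) ∧
        x (j + 2 * n) - x (j + 2 * n - 2) = x j - x (j - 2) := by
      intro j n
      induction n with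
      | zero => simp
      | succ n ih =>
        obtain ⟨h1, h2⟩ := ih
        have e1 := h (j + 2 * n + 2)
        have e2 := h (j + 2 * n + 1)
        rw [show j + 2 * (n : ℤ) + 2 - 1 = j + 2 * n + 1 by ring,
          show j + 2 * (n : ℤ) + 2 - 2 = j + 2 * n by ring,
          show j + 2 * (n : ℤ) + 2 - 3 = j + 2 * n - 1 by ring] at e1
        rw [show j + 2 * (n : ℤ) + 1 - 1 = j + 2 * n by ring,
          show j + 2 * (n : ℤ) + 1 - 2 = j + 2 * n - 1 by ring,
          show j + 2 * (n : ℤ) + 1 - 3 = j + 2 * n - 2 by ring] at e2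
        push_cast
        rw [show j + 2 * ((n : ℤ) + 1) = j + 2 * n + 2 by ring,
          show j + 2 * (n : ℤ) + 2 - 2 = j + 2 * n by ring]
        constructor <;> linarith
    have per : ∀ j : ℤ, x j = x (j - 2) := by
      intro j
      by_contra hne
      have hpos : 0 < |x j - x (j - 2)| := abs_pos.mpr (sub_ne_zero.mpr hne)
      obtain ⟨n, hn⟩ := exists_nat_gt (2 * M / |x j - x (j - 2)|)
      rw [div_lt_iff₀ hpos] at hn
      have e : (n : ℝ) * (x j - x (j - 2)) = x (j + 2 * n) - x j := by
        rw [(lin j n).1]; ring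
      have e' : (n : ℝ) * |x j - x (j - 2)| = |x (j + 2 * n) - x j| := by
        rw [← e, abs_mul, Nat.abs_cast]
      have := abs_sub (x (j + 2 * n)) (x j)
      linarith [hM (j + 2 * n), hM j]
    have hp : Function.Periodic x 2 := fun j => by
      simpa using per (j + 2)
    refine ⟨(x 0 + x 1) / 2, (x 0 - x 1) / 2, fun k => ?_⟩
    rcases Int.even_or_odd' k with ⟨m, rfl | rfl⟩
    · have h0 : x (2 * m) = x 0 := by
        simpa [mul_comm] using hp.int_mul m 0
      rw [h0, (even_two_mul m).neg_one_zpow]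
      ring
    · have h1 : x (2 * m + 1) = x 1 := by
        simpa [mul_comm, add_comm] using hp.int_mul m 1
      rw [h1, (odd_two_mul_add_one m).neg_one_zpow]
      ring
  · rintro ⟨a, b, h⟩ k
    have hne : (-1 : ℝ) ≠ 0 := by norm_num
    simp only [h, zpow_sub₀ hne]
    norm_num
end
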